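/- arXiv:1611.01523 — 2 statements merged into one kernel-verified Lean document; each statement's English description precedes it below -/
import Mathlib

section
/- Let A be a finite type with at least two elements and let n ≥ 4. Then the alternating group of (Fin n → A) equals the subgroup of Perm(Fin n → A) generated by the applications, along injections ι : Fin 4 ↪ Fin n, of even permutations of (Fin 4 → A). In words: the even permutations of A⁴ generate all even permutations of Aⁿ for all n ≥ 4. -/
/-- Extension of an operation on `m`-letter words to `n`-letter words along an
injection of coordinates: apply `F` on the coordinates selected by `ι`, leave
the rest unchanged. -/
noncomputable def extWord {A : Type*} {m n : ℕ} (ι : Fin m ↪ Fin n)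
    (F : (Fin m → A) → (Fin m → A)) (x : Fin n → A) : Fin n → A :=
  fun k => if h : ∃ j, ι j = k then F (x ∘ ι) h.choose else x k

theorem extWord_comp {A : Type*} {m n : ℕ} (ι : Fin m ↪ Fin n)
    (F : (Fin m → A) → (Fin m → A)) (x : Fin n → A) :
    (extWord ι F x) ∘ ι = F (x ∘ ι) := by
  funext j
  have h : ∃ j', ι j' = ι j := ⟨j, rfl⟩
  simp only [Function.comp_apply, extWord, dif_pos h]
  congr 1
  exact ι.injective h.choose_spec

/-- The application of a gate `f` of arity `m` along an injection `ι : Fin m ↪ Fin n`: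
the resulting permutation `g` of words of length `n` satisfies
`(g x) (ι j) = (f (x ∘ ι)) j` for all `j : Fin m`, and `g x k = x k` for every
coordinate `k` outside the range of `ι`. -/
noncomputable def applyAlong {A : Type*} {m n : ℕ} (f : Equiv.Perm (Fin m → A))
    (ι : Fin m ↪ Fin n) : Equiv.Perm (Fin n → A) where
  toFun := extWord ι f
  invFun := extWord ι f.symm
  left_inv x := by
    funext k
    by_cases h : ∃ j, ι j = k
    · obtain ⟨j, rfl⟩ := h
      have hj : extWord ι (⇑f.symm) (extWord ι (⇑f) x) (ι j)
          = ((extWord ι (⇑f.symm) (extWord ι (⇑f) x)) ∘ ι) j := rfl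
      rw [hj, extWord_comp, extWord_comp]
      simp
    · simp only [extWord, dif_neg h]
  right_inv x := by
    funext k
    by_cases h : ∃ j, ι j = k
    · obtain ⟨j, rfl⟩ := h
      have hj : extWord ι (⇑f) (extWord ι (⇑f.symm) x) (ι j)
          = ((extWord ι (⇑f) (extWord ι (⇑f.symm) x)) ∘ ι) j := rfl
      rw [hj, extWord_comp, extWord_comp]
      simp
    · simp only [extWord, dif_neg h]

/-!
The idea is to climb one coordinate at a time. Let `G` be the group generated on words of length
`m + 2` by the even gates of arity `m + 1`. Two gates applied along the first and the last `m + 1`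
coordinates overlap in `m` coordinates. As soon as there are three words of length `m`, 3-cycles can
be chosen for the two gates so that the supports of their applications meet in exactly one word, and
then the commutator of the applications is a 3-cycle in `G`. On the other hand, `G` is 2-transitive:
even gates act 2-transitively on words of length `m + 1`, so two distinct words can be rewritten
everywhere except at one coordinate, and a second gate then rewrites that coordinate as well.
By Jordan, a primitive group containing a 3-cycle contains the alternating group.
-/

open Equiv Equiv.Perm
open scoped commutatorElement

section PermLemmas

variable {α β : Type*} [Fintype α] [DecidableEq α] [Fintype β] [DecidableEq β]

theorem alternatingGroup_le_comap (φ : Perm α →* Perm β) :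
    alternatingGroup α ≤ (alternatingGroup β).comap φ := by
  rw [← closure_three_cycles_eq_alternating, Subgroup.closure_le]
  intro g hg
  have hg3 : g ^ 3 = 1 := hg.orderOf ▸ pow_orderOf_eq_one g
  calc sign (φ g) = sign (φ g) ^ 3 := by rw [pow_succ, Int.units_sq, one_mul]
    _ = 1 := by rw [← map_pow, ← map_pow, hg3, map_one, map_one]

theorem exists_isThreeCycle_support_eq {a b c : α} (hab : a ≠ b) (hac : a ≠ c) (hbc : b ≠ c) :
    ∃ g : Perm α, g.IsThreeCycle ∧ g.support = {a, b, c} := by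
  have hsupp : (swap a b * swap b c).support = {a, b, c} :=
    support_swap_mul_swap (by simp [hab, hac, hbc])
  refine ⟨_, card_support_eq_three_iff.1 ?_, hsupp⟩
  rw [hsupp, Finset.card_eq_three]
  exact ⟨a, b, c, hab, hac, hbc, rfl⟩

theorem isThreeCycle_commutator_of_support_inter_eq_singleton {f g : Perm α} {p : α}
    (h : f.support ∩ g.support = {p}) : ⁅f, g⁆.IsThreeCycle := by
  have hmem (x : α) : f x ≠ x ∧ g x ≠ x ↔ x = p := by
    simpa only [Finset.mem_inter, mem_support, Finset.mem_singleton] using Finset.ext_iff.1 h x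
  obtain ⟨hf, hg⟩ := (hmem p).2 rfl
  have hgf : g (f p) = f p := by
    by_contra hne
    exact hf ((hmem _).1 ⟨f.injective.ne hf, hne⟩)
  have hfg : f (g p) = g p := by
    by_contra hne
    exact hg ((hmem _).1 ⟨hne, g.injective.ne hg⟩)
  have hne : f p ≠ g p := fun e => hf (f.injective (e ▸ hfg))
  -- `f * g` and `g * f` differ only at `p` and at its preimages under `f` and `g`.
  have hmul : f * g = swap (f p) p * swap (f p) (g p) * (g * f) := by
    ext x
    simp only [mul_apply, swap_apply_def]
    grind [f.injective.eq_iff, g.injective.eq_iff]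
  have hcomm : ⁅f, g⁆ = swap (f p) p * swap (f p) (g p) := by
    rw [commutatorElement_def, hmul]
    group
  exact hcomm ▸ isThreeCycle_swap_mul_swap_same hf hne hg.symm

theorem exists_mem_alternatingGroup_apply_pair (hα : 4 ≤ Nat.card α) {x y x' y' : α}
    (h : x ≠ y) (h' : x' ≠ y') : ∃ f ∈ alternatingGroup α, f x = x' ∧ f y = y' := by
  have := alternatingGroup.isMultiplyPretransitive α
  have htwo : MulAction.IsMultiplyPretransitive (alternatingGroup α) α 2 :=
    MulAction.isMultiplyPretransitive_of_le (n := Nat.card α - 2) (by lia) (Nat.sub_le _ _)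
  obtain ⟨f, hx, hy⟩ := MulAction.is_two_pretransitive_iff.1 htwo h h'
  exact ⟨f, f.2, hx, hy⟩

end PermLemmas

section ApplyAlong

variable {A : Type*} {l m n : ℕ}

theorem applyAlong_comp (f : Perm (Fin m → A)) (ι : Fin m ↪ Fin n) (x : Fin n → A) :
    applyAlong f ι x ∘ ι = f (x ∘ ι) :=
  extWord_comp ι f x

theorem applyAlong_of_notMem_range (f : Perm (Fin m → A)) {ι : Fin m ↪ Fin n} {k : Fin n}
    (hk : k ∉ Set.range ι) (x : Fin n → A) : applyAlong f ι x k = x k :=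
  dif_neg hk

theorem applyAlong_eq_iff {f : Perm (Fin m → A)} {ι : Fin m ↪ Fin n} {x y : Fin n → A} :
    applyAlong f ι x = y ↔ f (x ∘ ι) = y ∘ ι ∧ ∀ k ∉ Set.range ι, x k = y k := by
  constructor
  · rintro rfl
    exact ⟨(applyAlong_comp f ι x).symm, fun k hk => (applyAlong_of_notMem_range f hk x).symm⟩
  · rintro ⟨hon, hoff⟩
    funext k
    by_cases hk : k ∈ Set.range ι
    · obtain ⟨j, rfl⟩ := hk
      exact congrFun ((applyAlong_comp f ι x).trans hon) j
    · exact (applyAlong_of_notMem_range f hk x).trans (hoff k hk)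

theorem applyAlong_refl (f : Perm (Fin m → A)) :
    applyAlong f (Function.Embedding.refl _) = f :=
  Equiv.ext fun _ => applyAlong_eq_iff.2 ⟨rfl, fun k hk => absurd ⟨k, rfl⟩ hk⟩

theorem applyAlong_mul (f g : Perm (Fin m → A)) (ι : Fin m ↪ Fin n) :
    applyAlong (f * g) ι = applyAlong f ι * applyAlong g ι := by
  refine Equiv.ext fun x => applyAlong_eq_iff.2 ⟨?_, fun k hk => ?_⟩
  · simp only [mul_apply, applyAlong_comp]
  · simp only [mul_apply, applyAlong_of_notMem_range _ hk]

theorem applyAlong_applyAlong (f : Perm (Fin l → A)) (κ : Fin l ↪ Fin m)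
    (ι : Fin m ↪ Fin n) : applyAlong (applyAlong f κ) ι = applyAlong f (κ.trans ι) := by
  refine Equiv.ext fun x => applyAlong_eq_iff.2 ⟨applyAlong_eq_iff.2 ⟨?_, fun j hj => ?_⟩,
    fun k hk => ?_⟩
  · exact (applyAlong_comp f (κ.trans ι) x).symm
  · refine (applyAlong_of_notMem_range f (ι := κ.trans ι) ?_ x).symm
    rintro ⟨i, hi⟩
    exact hj ⟨i, ι.injective hi⟩
  · refine (applyAlong_of_notMem_range f (ι := κ.trans ι) ?_ x).symm
    rintro ⟨i, rfl⟩
    exact hk ⟨κ i, rfl⟩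

/-- `applyAlong` for a fixed injection of coordinates, as a group homomorphism. -/
noncomputable def applyAlongHom (ι : Fin m ↪ Fin n) :
    Perm (Fin m → A) →* Perm (Fin n → A) :=
  MonoidHom.mk' (applyAlong · ι) (applyAlong_mul · · ι)

variable [Fintype A] [DecidableEq A]

theorem mem_support_applyAlong {f : Perm (Fin m → A)} {ι : Fin m ↪ Fin n} {x : Fin n → A} :
    x ∈ (applyAlong f ι).support ↔ x ∘ ι ∈ f.support := by
  simp [applyAlong_eq_iff]

theorem applyAlong_mem_alternatingGroup {f : Perm (Fin m → A)}
    (hf : f ∈ alternatingGroup (Fin m → A)) (ι : Fin m ↪ Fin n) :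
    applyAlong f ι ∈ alternatingGroup (Fin n → A) :=
  alternatingGroup_le_comap (applyAlongHom ι) hf

theorem support_applyAlong_castSucc_inter_support_applyAlong_succ {a b : A} {o p r : Fin m → A}
    (hop : o ≠ p) (hor : o ≠ r) (hpr : p ≠ r) {f g : Perm (Fin (m + 1) → A)}
    (hf : f.support = {Fin.cons a o, Fin.cons a p, Fin.cons b p})
    (hg : g.support = {Fin.snoc o a, Fin.snoc r a, Fin.snoc r b}) :
    (applyAlong f Fin.castSuccEmb).support ∩ (applyAlong g (Fin.succEmb (m + 1))).support =
      {Fin.cons (α := fun _ => A) a (Fin.snoc (α := fun _ => A) o a)} := by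
  ext x
  obtain ⟨c, w, d, rfl⟩ :
      ∃ c w d, x = Fin.cons (α := fun _ => A) c (Fin.snoc (α := fun _ => A) w d) :=
    ⟨x 0, Fin.init (Fin.tail x), Fin.tail x (Fin.last m), by simp⟩
  have hinit : Fin.cons (α := fun _ => A) c (Fin.snoc (α := fun _ => A) w d) ∘ Fin.castSuccEmb =
      Fin.cons (α := fun _ => A) c w := by
    rw [Fin.cons_snoc_eq_snoc_cons]
    exact Fin.init_snoc (α := fun _ => A) _ _
  have htail : Fin.cons (α := fun _ => A) c (Fin.snoc (α := fun _ => A) w d) ∘ Fin.succEmb (m + 1) =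
      Fin.snoc (α := fun _ => A) w d := rfl
  simp only [Finset.mem_inter, mem_support_applyAlong, hinit, htail, hf, hg,
    Finset.mem_insert, Finset.mem_singleton, Fin.cons_inj, Fin.snoc_inj]
  -- The overlap `w` lies in `{o, p} ∩ {o, r} = {o}`, which forces `c = d = a`.
  grind

end ApplyAlong

section EvenGateGroup

variable {A : Type*} [Fintype A] [DecidableEq A] {l m n : ℕ}

variable (A m n) in
/-- The group of permutations of words of length `n` generated by the applications of even gates
of arity `m`, i.e. the even gates of arity `n` that they implement. -/
def evenGateGroup : Subgroup (Perm (Fin n → A)) :=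
  Subgroup.closure
    {σ | ∃ (f : Perm (Fin m → A)) (ι : Fin m ↪ Fin n),
      f ∈ alternatingGroup (Fin m → A) ∧ σ = applyAlong f ι}

theorem applyAlong_mem_evenGateGroup {f : Perm (Fin m → A)}
    (hf : f ∈ alternatingGroup (Fin m → A)) (ι : Fin m ↪ Fin n) :
    applyAlong f ι ∈ evenGateGroup A m n :=
  Subgroup.subset_closure ⟨f, ι, hf, rfl⟩

theorem evenGateGroup_le_iff {G : Subgroup (Perm (Fin n → A))} :
    evenGateGroup A m n ≤ G ↔
      ∀ f ∈ alternatingGroup (Fin m → A), ∀ ι : Fin m ↪ Fin n, applyAlong f ι ∈ G := by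
  rw [evenGateGroup, Subgroup.closure_le]
  exact ⟨fun h f hf ι => h ⟨f, ι, hf, rfl⟩, fun h _ ⟨f, ι, hf, hσ⟩ => hσ ▸ h f hf ι⟩

theorem evenGateGroup_le_alternatingGroup : evenGateGroup A m n ≤ alternatingGroup (Fin n → A) :=
  evenGateGroup_le_iff.2 fun _ hf ι => applyAlong_mem_alternatingGroup hf ι

theorem alternatingGroup_le_evenGateGroup_self :
    alternatingGroup (Fin m → A) ≤ evenGateGroup A m m := fun f hf =>
  applyAlong_refl f ▸ applyAlong_mem_evenGateGroup hf (Function.Embedding.refl _)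

theorem evenGateGroup_le_comap (ι : Fin m ↪ Fin n) :
    evenGateGroup A l m ≤ (evenGateGroup A l n).comap (applyAlongHom ι) :=
  evenGateGroup_le_iff.2 fun f hf κ =>
    show applyAlong (applyAlong f κ) ι ∈ evenGateGroup A l n from
      applyAlong_applyAlong f κ ι ▸ applyAlong_mem_evenGateGroup hf (κ.trans ι)

theorem evenGateGroup_le_evenGateGroup (h : alternatingGroup (Fin m → A) ≤ evenGateGroup A l m) :
    evenGateGroup A m n ≤ evenGateGroup A l n :=
  evenGateGroup_le_iff.2 fun _ hf ι => evenGateGroup_le_comap ι (h hf)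

theorem exists_isThreeCycle_mem_evenGateGroup (hA : 2 < Fintype.card A ^ m) :
    ∃ g ∈ evenGateGroup A (m + 1) (m + 2), g.IsThreeCycle := by
  obtain ⟨o, p, r, hop, hor, hpr⟩ : ∃ o p r : Fin m → A, o ≠ p ∧ o ≠ r ∧ p ≠ r :=
    Fintype.two_lt_card_iff.1 (by simpa using hA)
  obtain ⟨a, b, hab⟩ : ∃ a b : A, a ≠ b :=
    have ⟨i, hi⟩ := Function.ne_iff.1 hop
    ⟨o i, p i, hi⟩
  obtain ⟨f, hf, hfsupp⟩ := exists_isThreeCycle_support_eq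
    (a := (Fin.cons a o : Fin (m + 1) → A)) (b := Fin.cons a p) (c := Fin.cons b p)
    (by simp [hop]) (by simp [hab]) (by simp [hab])
  obtain ⟨g, hg, hgsupp⟩ := exists_isThreeCycle_support_eq
    (a := (Fin.snoc o a : Fin (m + 1) → A)) (b := Fin.snoc r a) (c := Fin.snoc r b)
    (by simp [hor]) (by simp [hab]) (by simp [hab])
  have hF := applyAlong_mem_evenGateGroup hf.mem_alternatingGroup
    (Fin.castSuccEmb : Fin (m + 1) ↪ Fin (m + 2))
  have hG := applyAlong_mem_evenGateGroup hg.mem_alternatingGroup (Fin.succEmb (m + 1))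
  exact ⟨_, mul_mem (mul_mem (mul_mem hF hG) (inv_mem hF)) (inv_mem hG),
    isThreeCycle_commutator_of_support_inter_eq_singleton
      (support_applyAlong_castSucc_inter_support_applyAlong_succ hop hor hpr hfsupp hgsupp)⟩

theorem exists_mem_evenGateGroup_apply_pair (hA : 4 ≤ Fintype.card A ^ m) {j : Fin (m + 1)}
    {x y x' y' : Fin (m + 1) → A} (hxy : ∃ i ≠ j, x i ≠ y i) (hxy' : ∃ i ≠ j, x' i ≠ y' i)
    (hx : x j = x' j) (hy : y j = y' j) :
    ∃ g ∈ evenGateGroup A m (m + 1), g x = x' ∧ g y = y' := by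
  have hne {u v : Fin (m + 1) → A} (huv : ∃ i ≠ j, u i ≠ v i) :
      u ∘ j.succAboveEmb ≠ v ∘ j.succAboveEmb := by
    obtain ⟨i, hij, hi⟩ := huv
    obtain ⟨k, rfl⟩ := Fin.exists_succAbove_eq hij
    exact fun e => hi (congrFun e k)
  obtain ⟨f, hf, hfx, hfy⟩ :=
    exists_mem_alternatingGroup_apply_pair (by simpa using hA) (hne hxy) (hne hxy')
  have hrange {k : Fin (m + 1)} (hk : k ∉ Set.range j.succAboveEmb) : k = j := by
    simpa using hk
  exact ⟨applyAlong f j.succAboveEmb, applyAlong_mem_evenGateGroup hf _,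
    applyAlong_eq_iff.2 ⟨hfx, fun k hk => hrange hk ▸ hx⟩,
    applyAlong_eq_iff.2 ⟨hfy, fun k hk => hrange hk ▸ hy⟩⟩

theorem exists_mem_evenGateGroup_apply_eq_const (hm : 2 ≤ m) {a b : A} (hab : a ≠ b)
    {x y : Fin (m + 1) → A} (hxy : x ≠ y) :
    ∃ g ∈ evenGateGroup A m (m + 1), g x = Function.const _ a ∧ g y = Function.const _ b := by
  have hA : 4 ≤ Fintype.card A ^ m :=
    calc 4 = 2 ^ 2 := rfl
      _ ≤ 2 ^ m := Nat.pow_le_pow_right two_pos hm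
      _ ≤ Fintype.card A ^ m := Nat.pow_le_pow_left (Fintype.one_lt_card_iff.2 ⟨a, b, hab⟩) m
  obtain ⟨i, hi⟩ := Function.ne_iff.1 hxy
  have : Nontrivial (Fin (m + 1)) := Fin.nontrivial_iff_two_le.2 (by lia)
  obtain ⟨j, hji⟩ := exists_ne i
  obtain ⟨k, hki, hkj⟩ := Fin.exists_ne_and_ne_of_two_lt i j (by lia)
  obtain ⟨g, hg, hgx, hgy⟩ := exists_mem_evenGateGroup_apply_pair hA (j := j)
    (x' := Function.update (Function.const _ a) j (x j))
    (y' := Function.update (Function.const _ b) j (y j))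
    ⟨i, hji.symm, hi⟩ ⟨i, hji.symm, by simpa [hji.symm] using hab⟩ (by simp) (by simp)
  obtain ⟨g', hg', hgx', hgy'⟩ := exists_mem_evenGateGroup_apply_pair hA (j := k)
    (x := Function.update (Function.const _ a) j (x j)) (x' := Function.const _ a)
    (y := Function.update (Function.const _ b) j (y j)) (y' := Function.const _ b)
    ⟨i, hki.symm, by simpa [hji.symm] using hab⟩ ⟨i, hki.symm, hab⟩ (by simp [hkj]) (by simp [hkj])
  exact ⟨g' * g, mul_mem hg' hg, by rw [mul_apply, hgx, hgx'], by rw [mul_apply, hgy, hgy']⟩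

theorem isMultiplyPretransitive_evenGateGroup_two [Nontrivial A] (hm : 2 ≤ m) :
    MulAction.IsMultiplyPretransitive (evenGateGroup A m (m + 1)) (Fin (m + 1) → A) 2 := by
  obtain ⟨a, b, hab⟩ := exists_pair_ne A
  refine MulAction.is_two_pretransitive_iff.2 fun {x y x' y'} hxy hxy' => ?_
  obtain ⟨g, hg, hgx, hgy⟩ := exists_mem_evenGateGroup_apply_eq_const hm hab hxy
  obtain ⟨g', hg', hgx', hgy'⟩ := exists_mem_evenGateGroup_apply_eq_const hm hab hxy'
  refine ⟨⟨g'⁻¹ * g, mul_mem (inv_mem hg') hg⟩, ?_, ?_⟩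
  · exact inv_eq_iff_eq.2 (hgx.trans hgx'.symm)
  · exact inv_eq_iff_eq.2 (hgy.trans hgy'.symm)

theorem alternatingGroup_le_evenGateGroup_succ (hA : 2 < Fintype.card A ^ m) :
    alternatingGroup (Fin (m + 2) → A) ≤ evenGateGroup A (m + 1) (m + 2) := by
  have hm : m ≠ 0 := by
    rintro rfl
    simp at hA
  have : Nontrivial A := Fintype.one_lt_card_iff_nontrivial.1 <|
    lt_of_pow_lt_pow_left' m (by rw [one_pow]; lia)
  obtain ⟨g, hg, hg3⟩ := exists_isThreeCycle_mem_evenGateGroup hA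
  have htwo := isMultiplyPretransitive_evenGateGroup_two (A := A) (m := m + 1) (by lia)
  exact alternatingGroup_le_of_isPreprimitive_of_isThreeCycle_mem
    (MulAction.isPreprimitive_of_is_two_pretransitive htwo) hg3 hg

theorem even_fourAry_gates_generate_alternating_general
    (hA : 2 < Fintype.card A ^ m) (hmn : m < n) :
    evenGateGroup A (m + 1) n = alternatingGroup (Fin n → A) := by
  refine le_antisymm evenGateGroup_le_alternatingGroup ?_
  induction n, hmn using Nat.le_induction with
  | base => exact alternatingGroup_le_evenGateGroup_self
  | succ n hmn ih =>
    obtain ⟨k, rfl⟩ : ∃ k, n = k + 1 := Nat.exists_eq_succ_of_ne_zero (by lia)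
    have hA1 : 1 < Fintype.card A := lt_of_pow_lt_pow_left' m (by rw [one_pow]; lia)
    have hAk : 2 < Fintype.card A ^ k :=
      hA.trans_le (Nat.pow_le_pow_right hA1.le (by lia))
    exact (alternatingGroup_le_evenGateGroup_succ hAk).trans (evenGateGroup_le_evenGateGroup ih)

end EvenGateGroup

/-- **Even 4-ary gates generate all even gates** (Theorem 10 of the paper).
Let `A` be a finite type with at least two elements and `n ≥ 4`.  The alternating group
of `Fin n → A` equals the subgroup of `Perm (Fin n → A)` generated by the applications,
along injections `ι : Fin 4 ↪ Fin n`, of even permutations of `Fin 4 → A`. -/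
theorem even_fourAry_gates_generate_alternating
    {A : Type*} [Fintype A] [DecidableEq A] (hA : 1 < Fintype.card A)
    (n : ℕ) (hn : 4 ≤ n) :
    Subgroup.closure
        {σ : Equiv.Perm (Fin n → A) |
          ∃ (f : Equiv.Perm (Fin 4 → A)) (ι : Fin 4 ↪ Fin n),
            f ∈ alternatingGroup (Fin 4 → A) ∧ σ = applyAlong f ι} =
      alternatingGroup (Fin n → A) := by
  have hA3 : 2 < Fintype.card A ^ 3 :=
    calc 2 < 2 ^ 3 := by norm_num
      _ ≤ Fintype.card A ^ 3 := Nat.pow_le_pow_left hA 3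
  exact even_fourAry_gates_generate_alternating_general hA3 hn
end

section
/- Let A be a finite type with at least two elements. For every finite family g₁, …, g_N of conservative gates, where gᵢ is a conservative permutation of (Fin mᵢ → A), there exist n ∈ ℕ and a conservative permutation f of (Fin n → A) such that for every k ≥ 0, the permutation f ⊕ id_k of (Fin (n+k) → A) — acting as f on the first n coordinates and fixing the remaining k coordinates — does not belong to the subgroup of Perm(Fin (n+k) → A) generated by the applications of the gates gᵢ along injections Fin mᵢ ↪ Fin (n+k). In words: the conservative revital is not finitely generated, even allowing arbitrarily many borrowed symbols. -/
/-- The weight of a word `x : Fin n → A` is the multiset of its entries. -/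
def wordWeight {A : Type*} {n : ℕ} (x : Fin n → A) : Multiset A :=
  Multiset.map x Finset.univ.val

/-- A permutation of words is *conservative* if it preserves the weight of every word. -/
def IsConservative {A : Type*} {n : ℕ} (f : Equiv.Perm (Fin n → A)) : Prop :=
  ∀ x : Fin n → A, wordWeight (f x) = wordWeight x

/-!
Fix two letters `a ≠ b`. A conservative gate permutes the words over `{a, b}`, so it suffices to
work over `Bool`. Give the letters the weights `1` and `1 + X` in `𝔽₂[X]`, whose sum is `X`, and a
word the product of the weights of its letters. Summing, over the words of each weight `r`, the
parity of a weight-preserving permutation times `r` gives an additive invariant in `𝔽₂[X]`.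
Applying a gate of arity `m` to words of length `n` lets it act independently for every content of
the `n - m` idle letters, which multiplies the invariant by `(1 + (1 + X)) ^ (n - m) = X ^ (n - m)`.
So everything generated by gates of arity below `n` has, on words of length `n + k`, an invariant
divisible by `X ^ (k + 1)`. A swap of two words of length `n` with `j` letters `b` has invariant
`(1 + X) ^ j`, which becomes `X ^ k * (1 + X) ^ j` after borrowing `k` letters.
-/

open Equiv Polynomial

section SignParity

variable (R : Type*) [Semiring R]

/-- The sign `±1` written additively, as an element `0` or `1` of a ring of characteristic two. -/
def signParity (u : ℤˣ) : R := if u = 1 then 0 else 1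

@[simp] lemma signParity_one : signParity R 1 = 0 := if_pos rfl

@[simp] lemma signParity_neg_one : signParity R (-1) = 1 := if_neg (by decide)

lemma signParity_mul [CharP R 2] (u v : ℤˣ) :
    signParity R (u * v) = signParity R u + signParity R v := by
  rcases Int.units_eq_one_or u with rfl | rfl <;> rcases Int.units_eq_one_or v with rfl | rfl <;>
    simp [CharTwo.add_self_eq_zero]

lemma signParity_prod [CharP R 2] {I : Type*} (s : Finset I) (u : I → ℤˣ) :
    signParity R (∏ i ∈ s, u i) = ∑ i ∈ s, signParity R (u i) := by
  classical
  induction s using Finset.induction_on with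
  | empty => simp
  | insert i s hi ih => rw [Finset.prod_insert hi, Finset.sum_insert hi, signParity_mul, ih]

end SignParity

section FiberPart

variable {Z W : Type*} [Fintype Z] [DecidableEq W] {q : Z → W} {F G : Perm Z}

/-- The permutation that agrees with `F` on the fibre `q z = r` and fixes all other points. The
value is `1` if `F` does not preserve this fibre. -/
def fiberPart (q : Z → W) (F : Perm Z) (r : W) : Perm Z :=
  if h : ∀ z, q (F z) = r ↔ q z = r then
    Perm.ofSubtype (p := fun z => q z = r) (F.subtypePerm h)
  else 1

lemma fiberPart_apply (hF : ∀ z, q (F z) = q z) (r : W) (z : Z) :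
    fiberPart q F r z = if q z = r then F z else z := by
  have h : ∀ z, q (F z) = r ↔ q z = r := fun z => by rw [hF]
  rw [fiberPart, dif_pos h]
  split_ifs with hz
  · rw [Perm.ofSubtype_apply_of_mem (p := fun z => q z = r) _ hz, Perm.subtypePerm_apply]
  · exact Perm.ofSubtype_apply_of_not_mem (p := fun z => q z = r) _ hz

lemma fiberPart_one (q : Z → W) (r : W) : fiberPart q 1 r = 1 := by
  ext z
  rw [fiberPart_apply fun _ => rfl, Perm.one_apply, ite_self]

lemma fiberPart_mul (hF : ∀ z, q (F z) = q z) (hG : ∀ z, q (G z) = q z) (r : W) :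
    fiberPart q (F * G) r = fiberPart q F r * fiberPart q G r := by
  ext z
  by_cases hz : q z = r <;> simp [fiberPart_apply, hF, hG, hz]

lemma fiberPart_swap [DecidableEq Z] {u v : Z} (h : q u = q v) (r : W) :
    fiberPart q (swap u v) r = if q u = r then swap u v else 1 := by
  ext z
  rw [fiberPart_apply (apply_swap_eq_self h)]
  grind [Perm.one_apply]

end FiberPart

section WeightedParity

variable {R Y Z : Type*} [CommRing R] [DecidableEq R] [Fintype Z] [DecidableEq Z]
  {q : Z → R} {F G : Perm Z}

/-- The sum over all fibres `q z = r` of the parity of `F` on this fibre times `r`. It is meant for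
permutations `F` preserving `q`. -/
def weightedParity (q : Z → R) (F : Perm Z) : R :=
  ∑ r ∈ Finset.univ.image q, signParity R (Perm.sign (fiberPart q F r)) * r

lemma weightedParity_one (q : Z → R) : weightedParity q 1 = 0 := by
  simp [weightedParity, fiberPart_one]

lemma weightedParity_mul [CharP R 2] (hF : ∀ z, q (F z) = q z) (hG : ∀ z, q (G z) = q z) :
    weightedParity q (F * G) = weightedParity q F + weightedParity q G := by
  simp only [weightedParity, fiberPart_mul hF hG, map_mul, signParity_mul, add_mul,
    Finset.sum_add_distrib]

lemma weightedParity_inv [CharP R 2] (hF : ∀ z, q (F z) = q z) (hF' : ∀ z, q (F⁻¹ z) = q z) :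
    weightedParity q F⁻¹ = -weightedParity q F := by
  rw [eq_neg_iff_add_eq_zero, ← weightedParity_mul hF' hF, inv_mul_cancel, weightedParity_one]

lemma weightedParity_swap {u v : Z} (huv : u ≠ v) (h : q u = q v) :
    weightedParity q (swap u v) = q u := by
  rw [weightedParity, Finset.sum_eq_single (q u)]
  · simp [fiberPart_swap h, Perm.sign_swap huv]
  · intro r _ hr
    simp [fiberPart_swap h, hr.symm]
  · simp

lemma dvd_weightedParity_of_mem_closure [CharP R 2] {d : R} {S : Set (Perm Z)}
    (hS : ∀ F ∈ S, (∀ z, q (F z) = q z) ∧ d ∣ weightedParity q F) (hF : F ∈ Subgroup.closure S) :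
    d ∣ weightedParity q F := by
  suffices (∀ z, q (F z) = q z) ∧ d ∣ weightedParity q F from this.2
  induction hF using Subgroup.closure_induction with
  | mem F h => exact hS F h
  | one => exact ⟨fun _ => rfl, by simp [weightedParity_one]⟩
  | mul F G _ _ hF hG =>
    refine ⟨fun z => by rw [Perm.mul_apply, hF.1, hG.1], ?_⟩
    rw [weightedParity_mul hF.1 hG.1]
    exact dvd_add hF.2 hG.2
  | inv F _ hF =>
    have hF' : ∀ z, q (F⁻¹ z) = q z := fun z => by
      rw [← hF.1, Perm.coe_inv, apply_symm_apply]
    refine ⟨hF', ?_⟩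
    rw [weightedParity_inv hF.1 hF']
    exact hF.2.neg_right

lemma weightedParity_eq_sum_of_forall_mem (hF : ∀ z, q (F z) = q z) {T : Finset R}
    (hT : ∀ z, q z ∈ T) :
    weightedParity q F = ∑ r ∈ T, signParity R (Perm.sign (fiberPart q F r)) * r := by
  refine Finset.sum_subset (Finset.image_subset_iff.2 fun z _ => hT z) fun r _ hr => ?_
  have hempty : fiberPart q F r = 1 := by
    ext z
    have hz : q z ≠ r := fun h => hr (Finset.mem_image.2 ⟨z, Finset.mem_univ z, h⟩)
    rw [fiberPart_apply hF, if_neg hz, Perm.one_apply]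
  rw [hempty, map_one, signParity_one, zero_mul]

section Product

variable [Fintype Y] [DecidableEq Y]

lemma weightedParity_permCongr (e : Y ≃ Z) {F : Perm Y} (hF : ∀ y, q (e (F y)) = q (e y)) :
    weightedParity q (e.permCongr F) = weightedParity (q ∘ e) F := by
  have hF' : ∀ z, q (e.permCongr F z) = q z := fun z => by
    rw [permCongr_apply, hF, apply_symm_apply]
  have hfiber (r : R) : fiberPart q (e.permCongr F) r = e.permCongr (fiberPart (q ∘ e) F r) := by
    ext z
    rw [fiberPart_apply hF', permCongr_apply, permCongr_apply, fiberPart_apply hF]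
    simp only [Function.comp_apply, apply_symm_apply]
    split_ifs <;> simp
  rw [weightedParity, weightedParity, ← Finset.image_image, Finset.image_univ_equiv]
  simp only [hfiber, Perm.sign_permCongr]

variable [IsDomain R]

lemma weightedParity_mul_const (hF : ∀ z, q (F z) = q z) (c : R) :
    weightedParity (fun z => q z * c) F = weightedParity q F * c := by
  rcases eq_or_ne c 0 with rfl | hc
  · simp only [weightedParity, mul_zero]
    exact Finset.sum_eq_zero fun r hr => by
      obtain ⟨z, -, rfl⟩ := Finset.mem_image.1 hr
      exact mul_zero _
  · have hfiber (r : R) : fiberPart (fun z => q z * c) F (r * c) = fiberPart q F r := by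
      ext z
      rw [fiberPart_apply hF, fiberPart_apply fun z => by rw [hF]]
      simp only [mul_left_inj' hc]
    have himage : Finset.univ.image (fun z => q z * c) = (Finset.univ.image q).image (· * c) :=
      (Finset.image_image (f := q) (g := (· * c))).symm
    rw [weightedParity, himage, Finset.sum_image (mul_left_injective₀ hc).injOn, weightedParity,
      Finset.sum_mul]
    simp only [hfiber, mul_assoc]

lemma weightedParity_prodCongrLeft [CharP R 2] (hF : ∀ z, q (F z) = q z) (w : Y → R) :
    weightedParity (fun x : Z × Y => q x.1 * w x.2) (prodCongrLeft fun _ => F) =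
      weightedParity q F * ∑ y, w y := by
  have hsign (r : R) :
      Perm.sign (fiberPart (fun x : Z × Y => q x.1 * w x.2) (prodCongrLeft fun _ => F) r) =
        ∏ y, Perm.sign (fiberPart (fun z => q z * w y) F r) := by
    rw [← Perm.sign_prodCongrLeft]
    congr 1
    ext1 ⟨z, y⟩
    rw [fiberPart_apply fun x => by rw [prodCongrLeft_apply, hF], prodCongrLeft_apply,
      prodCongrLeft_apply, fiberPart_apply fun z => by rw [hF]]
    split_ifs <;> rfl
  rw [weightedParity]
  simp only [hsign, signParity_prod, Finset.sum_mul]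
  rw [Finset.sum_comm, Finset.mul_sum]
  refine Finset.sum_congr rfl fun y _ => ?_
  rw [← weightedParity_mul_const hF, weightedParity_eq_sum_of_forall_mem fun z => by rw [hF]]
  exact fun z => Finset.mem_image_of_mem (fun x : Z × Y => q x.1 * w x.2) (Finset.mem_univ (z, y))

end Product

end WeightedParity

section LetterWeight

variable {B R : Type*} [CommRing R]

/-- The multiplicative extension of a weight on letters to words over any finite index type. -/
def letterWeight {I : Type*} [Fintype I] (p : B → R) (x : I → B) : R := ∏ i, p (x i)

lemma sum_letterWeight [Fintype B] {I : Type*} [Fintype I] [DecidableEq I] (p : B → R) :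
    ∑ x : I → B, letterWeight p x = (∑ b, p b) ^ Fintype.card I := by
  simp only [letterWeight, ← Fintype.prod_sum, Finset.prod_const, Finset.card_univ]

lemma letterWeight_eq_of_wordWeight_eq (p : B → R) {n : ℕ} {x y : Fin n → B}
    (h : wordWeight x = wordWeight y) : letterWeight p x = letterWeight p y := by
  have hprod (z : Fin n → B) : letterWeight p z = ((wordWeight z).map p).prod := by
    rw [wordWeight, Multiset.map_map]
    rfl
  rw [hprod, hprod, h]

variable {m n : ℕ}

/-- The decomposition of a word into its letters along `ι` and its letters outside the range. -/
noncomputable def splitAlong (ι : Fin m ↪ Fin n) :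
    (Fin n → B) ≃ (Fin m → B) × (↥(Set.range ι)ᶜ → B) :=
  (arrowCongr ((sumCongr (ofInjective ι ι.injective) (Equiv.refl _)).trans
    (Set.sumCompl (Set.range ι))).symm (Equiv.refl B)).trans (sumArrowEquivProdArrow _ _ _)

lemma splitAlong_applyAlong (ι : Fin m ↪ Fin n) (g : Perm (Fin m → B)) (x : Fin n → B) :
    splitAlong ι (applyAlong g ι x) = (g (splitAlong ι x).1, (splitAlong ι x).2) :=
  Prod.ext (extWord_comp ι g x) (funext fun k => dif_neg k.2)

lemma letterWeight_splitAlong (p : B → R) (ι : Fin m ↪ Fin n) (x : Fin n → B) :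
    letterWeight p (splitAlong ι x).1 * letterWeight p (splitAlong ι x).2 = letterWeight p x := by
  classical
  rw [letterWeight, letterWeight, letterWeight, ← Equiv.prod_comp
    ((sumCongr (ofInjective ι ι.injective) (Equiv.refl _)).trans (Set.sumCompl (Set.range ι))),
    Fintype.prod_sum_type]
  rfl

lemma letterWeight_applyAlong {p : B → R} {g : Perm (Fin m → B)}
    (hg : ∀ u, letterWeight p (g u) = letterWeight p u) (ι : Fin m ↪ Fin n) (x : Fin n → B) :
    letterWeight p (applyAlong g ι x) = letterWeight p x := by
  rw [← letterWeight_splitAlong p ι, splitAlong_applyAlong, hg, letterWeight_splitAlong]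

lemma weightedParity_applyAlong [IsDomain R] [CharP R 2] [DecidableEq R] [Fintype B]
    [DecidableEq B] {p : B → R} {g : Perm (Fin m → B)}
    (hg : ∀ u, letterWeight p (g u) = letterWeight p u) (ι : Fin m ↪ Fin n) :
    weightedParity (letterWeight p) (applyAlong g ι) =
      weightedParity (letterWeight p) g * (∑ b, p b) ^ (n - m) := by
  classical
  have hsplit : applyAlong g ι = (splitAlong ι).symm.permCongr (prodCongrLeft fun _ => g) := by
    ext1 x
    rw [permCongr_apply, symm_symm, eq_symm_apply, splitAlong_applyAlong]
    rfl
  have hweight : letterWeight p ∘ (splitAlong ι).symm =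
      fun x : (Fin m → B) × (↥(Set.range ι)ᶜ → B) => letterWeight p x.1 * letterWeight p x.2 := by
    funext x
    rw [Function.comp_apply, ← letterWeight_splitAlong p ι, apply_symm_apply]
  have hcard : Fintype.card ↥(Set.range ι)ᶜ = n - m := by
    rw [Fintype.card_compl_set, Set.card_range_of_injective ι.injective, Fintype.card_fin,
      Fintype.card_fin]
  have hinvariant (x : (Fin m → B) × (↥(Set.range ι)ᶜ → B)) :
      letterWeight p ((splitAlong ι).symm (prodCongrLeft (fun _ => g) x)) =
        letterWeight p ((splitAlong ι).symm x) := by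
    rw [← letterWeight_splitAlong p ι, apply_symm_apply, prodCongrLeft_apply, hg,
      ← letterWeight_splitAlong p ι, apply_symm_apply]
  rw [hsplit, weightedParity_permCongr _ hinvariant, hweight, weightedParity_prodCongrLeft hg,
    sum_letterWeight, hcard]

end LetterWeight

section Closure

variable {A B κ : Type*} {m : κ → ℕ} {n : ℕ}

/-- All permutations of the words of length `n` that apply one of the gates `g i` along some
injection. -/
def gateApplications (g : ∀ i, Perm (Fin (m i) → A)) (n : ℕ) : Set (Perm (Fin n → A)) :=
  {σ | ∃ (i : κ) (ι : Fin (m i) ↪ Fin n), σ = applyAlong (g i) ι}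

lemma pow_dvd_weightedParity_of_mem_closure {R : Type*} [CommRing R] [IsDomain R] [CharP R 2]
    [DecidableEq R] [Fintype B] [DecidableEq B] {p : B → R} {g : ∀ i, Perm (Fin (m i) → B)}
    (hg : ∀ i u, letterWeight p (g i u) = letterWeight p u) {d : ℕ} (hd : ∀ i, d ≤ n - m i)
    {σ : Perm (Fin n → B)} (hσ : σ ∈ Subgroup.closure (gateApplications g n)) :
    (∑ b, p b) ^ d ∣ weightedParity (letterWeight p) σ := by
  refine dvd_weightedParity_of_mem_closure ?_ hσ
  rintro _ ⟨i, ι, rfl⟩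
  refine ⟨letterWeight_applyAlong (hg i) ι, ?_⟩
  rw [weightedParity_applyAlong (hg i)]
  exact (pow_dvd_pow _ (hd i)).mul_left _

/-- Letter weights `1` and `1 + X`, chosen to sum to `X` and to be units modulo `X`. -/
noncomputable def bitWeight (t : Bool) : (ZMod 2)[X] := if t then 1 + X else 1

lemma sum_bitWeight : ∑ t, bitWeight t = X := by
  rw [Fintype.sum_bool, bitWeight, bitWeight, if_pos rfl, if_neg Bool.false_ne_true,
    add_right_comm, CharTwo.add_self_eq_zero, zero_add]

lemma not_X_dvd_letterWeight_bitWeight {I : Type*} [Fintype I] (x : I → Bool) :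
    ¬ X ∣ letterWeight bitWeight x := by
  rw [letterWeight, Prime.dvd_finsetProd_iff prime_X]
  rintro ⟨i, -, hi⟩
  rw [X_dvd_iff, bitWeight] at hi
  split_ifs at hi <;> simp at hi

lemma applyAlong_swap_notMem_closure {g : ∀ i, Perm (Fin (m i) → Bool)}
    (hg : ∀ i u, letterWeight bitWeight (g i u) = letterWeight bitWeight u) (hm : ∀ i, m i < n)
    {u v : Fin n → Bool} (huv : u ≠ v) (hw : letterWeight bitWeight u = letterWeight bitWeight v)
    {k : ℕ} (ι : Fin n ↪ Fin (n + k)) :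
    applyAlong (swap u v) ι ∉ Subgroup.closure (gateApplications g (n + k)) := by
  classical
  intro hmem
  have hdvd : (∑ t, bitWeight t) ^ (k + 1) ∣
      weightedParity (letterWeight bitWeight) (applyAlong (swap u v) ι) :=
    pow_dvd_weightedParity_of_mem_closure hg (fun i => by have := hm i; omega) hmem
  rw [weightedParity_applyAlong (apply_swap_eq_self hw), weightedParity_swap huv hw,
    Nat.add_sub_cancel_left, sum_bitWeight, pow_succ',
    mul_dvd_mul_iff_right (pow_ne_zero k X_ne_zero)] at hdvd
  exact not_X_dvd_letterWeight_bitWeight u hdvd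

end Closure

section Alphabet

variable {A B κ : Type*} {e : B → A} {m n : ℕ}

lemma wordWeight_comp_inj (he : e.Injective) {x y : Fin n → B} :
    wordWeight (e ∘ x) = wordWeight (e ∘ y) ↔ wordWeight x = wordWeight y := by
  simp only [wordWeight, ← Multiset.map_map]
  exact (Multiset.map_injective he).eq_iff

lemma wordWeight_comp_perm (x : Fin n → A) (π : Perm (Fin n)) :
    wordWeight (x ∘ π) = wordWeight x := by
  rw [wordWeight, ← Multiset.map_map, Multiset.map_univ_val_equiv, wordWeight]

lemma exists_ne_wordWeight_eq (A : Type*) [Nontrivial A] (n : ℕ) :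
    ∃ u v : Fin (n + 2) → A, u ≠ v ∧ wordWeight u = wordWeight v := by
  obtain ⟨a, b, hab⟩ := exists_pair_ne A
  let u : Fin (n + 2) → A := Function.update (fun _ => a) 0 b
  refine ⟨u, u ∘ swap 0 1, fun h => hab ?_, (wordWeight_comp_perm u _).symm⟩
  simpa [u] using (congrFun h 0).symm

lemma IsConservative.exists_semiconj [Finite B] (he : e.Injective) {F : Perm (Fin n → A)}
    (hF : IsConservative F) :
    ∃ G : Perm (Fin n → B), Function.Semiconj (e ∘ · : (Fin n → B) → _) G F := by
  have hrange (x : Fin n → B) : ∃ y : Fin n → B, e ∘ y = F (e ∘ x) := by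
    have hletter (i : Fin n) : ∃ b, e b = F (e ∘ x) i := by
      have hi : F (e ∘ x) i ∈ wordWeight (F (e ∘ x)) :=
        Multiset.mem_map_of_mem _ (Finset.mem_univ i)
      rw [hF] at hi
      obtain ⟨j, -, hj⟩ := Multiset.mem_map.1 hi
      exact ⟨x j, hj⟩
    choose y hy using hletter
    exact ⟨y, funext hy⟩
  choose G hG using hrange
  have hinj : G.Injective := fun x y hxy =>
    he.comp_left (F.injective (by rw [← hG, ← hG, hxy]))
  exact ⟨Equiv.ofBijective G (Finite.injective_iff_bijective.1 hinj), hG⟩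

lemma semiconj_applyAlong {F : Perm (Fin m → A)} {G : Perm (Fin m → B)}
    (h : Function.Semiconj (e ∘ · : (Fin m → B) → _) G F) (ι : Fin m ↪ Fin n) :
    Function.Semiconj (e ∘ · : (Fin n → B) → _) (applyAlong G ι) (applyAlong F ι) := by
  intro x
  funext i
  change e (extWord ι G x i) = extWord ι F (e ∘ x) i
  rw [extWord, extWord]
  split_ifs with hi
  · exact congrFun (h (x ∘ ι)) hi.choose
  · rfl

lemma exists_semiconj_of_mem_closure {m : κ → ℕ} {F : ∀ i, Perm (Fin (m i) → A)}
    {G : ∀ i, Perm (Fin (m i) → B)}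
    (h : ∀ i, Function.Semiconj (e ∘ · : (Fin (m i) → B) → _) (G i) (F i))
    {σ : Perm (Fin n → A)} (hσ : σ ∈ Subgroup.closure (gateApplications F n)) :
    ∃ τ ∈ Subgroup.closure (gateApplications G n),
      Function.Semiconj (e ∘ · : (Fin n → B) → _) τ σ := by
  induction hσ using Subgroup.closure_induction with
  | mem σ hσ =>
    obtain ⟨i, ι, rfl⟩ := hσ
    exact ⟨applyAlong (G i) ι, Subgroup.subset_closure ⟨i, ι, rfl⟩, semiconj_applyAlong (h i) ι⟩
  | one => exact ⟨1, one_mem _, fun _ => rfl⟩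
  | mul σ σ' _ _ hσ hσ' =>
    obtain ⟨τ, hτ, hsemi⟩ := hσ
    obtain ⟨τ', hτ', hsemi'⟩ := hσ'
    exact ⟨τ * τ', mul_mem hτ hτ', hsemi.comp_right hsemi'⟩
  | inv σ _ hσ =>
    obtain ⟨τ, hτ, hsemi⟩ := hσ
    exact ⟨τ⁻¹, inv_mem hτ, hsemi.inverses_right τ.right_inv σ.left_inv⟩

end Alphabet

theorem conservative_not_finitely_generated_with_borrowed_symbols_general
    {A κ : Type*} [Nontrivial A] (m : κ → ℕ) (hm : BddAbove (Set.range m))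
    (g : ∀ i, Perm (Fin (m i) → A)) (hg : ∀ i, IsConservative (g i)) :
    ∃ (n : ℕ) (f : Perm (Fin n → A)), IsConservative f ∧
      ∀ k : ℕ, applyAlong f (Fin.castAddEmb k) ∉ Subgroup.closure
        (gateApplications g (n + k)) := by
  classical
  obtain ⟨M, hM⟩ := hm
  obtain ⟨a, b, hab⟩ := exists_pair_ne A
  obtain ⟨u, v, huv, hw⟩ := exists_ne_wordWeight_eq Bool M
  let e (t : Bool) : A := if t then b else a
  have he : e.Injective := Bool.injective_iff.2 hab
  choose G hG using fun i => (hg i).exists_semiconj he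
  have hG' (i : κ) (x : Fin (m i) → Bool) :
      letterWeight bitWeight (G i x) = letterWeight bitWeight x :=
    letterWeight_eq_of_wordWeight_eq _ ((wordWeight_comp_inj he).1 (by rw [(hG i).eq x, hg]))
  have hmn (i : κ) : m i < M + 2 := Nat.lt_add_right 1 (Nat.lt_succ_of_le (hM ⟨i, rfl⟩))
  refine ⟨M + 2, swap (e ∘ u) (e ∘ v), apply_swap_eq_self ((wordWeight_comp_inj he).2 hw),
    fun k hk => ?_⟩
  obtain ⟨τ, hτ, hτ_semi⟩ := exists_semiconj_of_mem_closure hG hk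
  have hswap : Function.Semiconj (e ∘ ·) (swap u v) (swap (e ∘ u) (e ∘ v)) :=
    he.comp_left.map_swap u v
  have hτ_eq : τ = applyAlong (swap u v) (Fin.castAddEmb k) := by
    ext1 x
    exact he.comp_left ((hτ_semi x).trans (semiconj_applyAlong hswap _ x).symm)
  exact applyAlong_swap_notMem_closure hG' hmn huv (letterWeight_eq_of_wordWeight_eq _ hw) _
    (hτ_eq ▸ hτ)

/-- **The conservative revital is not finitely generated, even with borrowed symbols**
(Theorem 16 of the paper).  Let `A` be a finite type with at least two elements.  For
every finite family `g i` (for `i : Fin N`) of conservative gates, where `g i` is a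
conservative permutation of `Fin (m i) → A`, there are `n : ℕ` and a conservative
permutation `f` of `Fin n → A` such that for every `k ≥ 0` the permutation `f ⊕ id_k`
of `Fin (n + k) → A` — acting as `f` on the first `n` coordinates and fixing the
remaining `k` coordinates — does not lie in the subgroup of `Perm (Fin (n+k) → A)`
generated by the applications of the gates `g i` along injections
`Fin (m i) ↪ Fin (n + k)`. -/
theorem conservative_not_finitely_generated_with_borrowed_symbols
    {A : Type*} [Fintype A] [DecidableEq A] (hA : 1 < Fintype.card A)
    (N : ℕ) (m : Fin N → ℕ) (g : ∀ i : Fin N, Equiv.Perm (Fin (m i) → A))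
    (hg : ∀ i : Fin N, IsConservative (g i)) :
    ∃ (n : ℕ) (f : Equiv.Perm (Fin n → A)), IsConservative f ∧
      ∀ k : ℕ, applyAlong f (Fin.castAddEmb k) ∉ Subgroup.closure
        {σ : Equiv.Perm (Fin (n + k) → A) |
          ∃ (i : Fin N) (ι : Fin (m i) ↪ Fin (n + k)), σ = applyAlong (g i) ι} := by
  have : Nontrivial A := Fintype.one_lt_card_iff_nontrivial.1 hA
  exact conservative_not_finitely_generated_with_borrowed_symbols_general m
    (Set.finite_range m).bddAbove g hg
end
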